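/- Let p be an odd prime with p > 3, let m be a primitive root modulo p, define x : ℕ → ℕ by x k = m^k % p, and set q̃ = (p-1)/2. Let q ≥ q̃ and N ≥ q̃ + 1 be natural numbers, and let Z be the real (q+1) × N matrix with entries Z (j, k) = x (k + j) for j ∈ {0, ..., q}, k ∈ {0, ..., N-1} (its columns are the lifted states z_k = (x_k, ..., x_{k+q})). Then the rank of Z equals q̃ + 1 = (p-1)/2 + 1. -/

import Mathlib

/-!
Write `h = (p - 1) / 2` and `x k = m ^ k % p`. Since `m ^ h = -1` in `ZMod p`, one has
`x (k + h) + x k = p` (`mod_add_half`), so `x` satisfies the linear recurrence with characteristic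
polynomial `(T - 1) (T ^ h + 1)` of degree `h + 1`. Hence every row of the matrix lies in the span
of the first `h + 1` rows, and a linear relation between those rows which holds at `h + 1`
consecutive times holds at all times.

The first `h + 1` rows are linearly independent: a relation `∑ c j * x (k + j) = 0` for all `k`,
multiplied by `w⁻¹ ^ k` and summed over a period, gives `C(w) * ∑ w⁻¹ ^ k * x k = 0`, where
`C = ∑ c j T ^ j` and `w ^ (p - 1) = 1`. For `w = 1` the second factor is a sum of positive
numbers. For `w ^ h = -1` it equals `∑ χ a * a` over the residues `0 ≤ a < p`, for the odd
Dirichlet character `χ` with `χ m = w⁻¹`. This is `-p * L(χ, 0)`, and by the functional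
equation it is nonzero because `L(χ⁻¹, 1) ≠ 0` (`sum_char_ne_zero`). So `C`, of degree at most
`h`, has `h + 1` distinct roots and vanishes (`eq_zero_of_forall_sum_eq_zero`).

The value `L(χ, 0)` rests on `ζ(0, a) - ζ(0, 1) = 1 - a` for the Hurwitz zeta function
(`hurwitzZeta_apply_zero_sub`), obtained by continuing the Dirichlet series to the left of
`re s = 1` after subtracting a first-order Taylor term from each summand.
-/
open Complex HurwitzZeta Filter Topology

/-! ### The Hurwitz zeta function at zero -/

lemma hasDerivAt_ofReal_cpow_neg {u : ℝ} (hu : 0 < u) (s : ℂ) :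
    HasDerivAt (fun t : ℝ => (t : ℂ) ^ (-s)) (-s * (u : ℂ) ^ (-(s + 1))) u := by
  have h : HasDerivAt (fun z : ℂ => z ^ (-s)) (-s * (u : ℂ) ^ (-s - 1) * 1) (u : ℂ) :=
    (hasDerivAt_id _).cpow_const (ofReal_mem_slitPlane.2 hu)
  convert h.comp_ofReal using 1
  ring_nf

lemma norm_cpow_neg_sub_le {c d : ℝ} (hc : 0 < c) (hcd : c ≤ d) {s : ℂ} (hs : -1 ≤ s.re) :
    ‖(c : ℂ) ^ (-s) - (d : ℂ) ^ (-s)‖ ≤ ‖s‖ * c ^ (-s.re - 1) * (d - c) := by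
  have := norm_image_sub_le_of_norm_deriv_le_segment' (f := fun t : ℝ => (t : ℂ) ^ (-s))
    (C := ‖s‖ * c ^ (-s.re - 1))
    (fun u hu => (hasDerivAt_ofReal_cpow_neg (hc.trans_le hu.1) s).hasDerivWithinAt)
    (fun u hu => ?_) d ⟨hcd, le_rfl⟩
  · rwa [norm_sub_rev]
  · rw [norm_mul, norm_neg, norm_cpow_eq_rpow_re_of_pos (hc.trans_le hu.1)]
    gcongr
    have : (-(s + 1)).re = -s.re - 1 := by simp; ring
    rw [this]
    exact Real.rpow_le_rpow_of_nonpos hc hu.1 (by linarith)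

/-- Second-order Taylor estimate for `u ↦ u ^ (-s)`, expanded at the right end point `d`. -/
lemma norm_cpow_neg_sub_sub_le {c d : ℝ} (hc : 0 < c) (hcd : c ≤ d) {s : ℂ} (hs : -1 ≤ s.re) :
    ‖(c : ℂ) ^ (-s) - (d : ℂ) ^ (-s) - s * (d - c) * (d : ℂ) ^ (-(s + 1))‖ ≤
      ‖s‖ * ‖s + 1‖ * c ^ (-s.re - 2) * (d - c) ^ 2 := by
  have := norm_image_sub_le_of_norm_deriv_le_segment'
    (f := fun t : ℝ => (t : ℂ) ^ (-s) + t * (s * (d : ℂ) ^ (-(s + 1))))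
    (C := ‖s‖ * ‖s + 1‖ * c ^ (-s.re - 2) * (d - c))
    (fun u hu => ((hasDerivAt_ofReal_cpow_neg (hc.trans_le hu.1) s).add
      ((hasDerivAt_id (u : ℂ)).comp_ofReal.mul_const _)).hasDerivWithinAt)
    (fun u hu => ?_) d ⟨hcd, le_rfl⟩
  · rw [norm_sub_rev] at this
    convert this using 1
    · congr 1; ring
    · ring
  · have h1 := norm_cpow_neg_sub_le (hc.trans_le hu.1) hu.2.le (s := s + 1) (by simp; linarith)
    have e : -s * (u : ℂ) ^ (-(s + 1)) + 1 * (s * (d : ℂ) ^ (-(s + 1))) =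
      -s * ((u : ℂ) ^ (-(s + 1)) - (d : ℂ) ^ (-(s + 1))) := by ring
    rw [e, norm_mul, norm_neg]
    have e2 : -(s + 1).re - 1 = -s.re - 2 := by simp; ring
    rw [e2] at h1
    have h2 : u ^ (-s.re - 2) ≤ c ^ (-s.re - 2) :=
      Real.rpow_le_rpow_of_nonpos hc hu.1 (by linarith)
    have hd : 0 ≤ d - u := by linarith [hu.2]
    have h3 : d - u ≤ d - c := by linarith [hu.1]
    calc _ ≤ ‖s‖ * (‖s + 1‖ * u ^ (-s.re - 2) * (d - u)) := by gcongr
      _ ≤ ‖s‖ * (‖s + 1‖ * c ^ (-s.re - 2) * (d - c)) := by gcongr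
      _ = _ := by ring

/-- The terms `E n s` of the proof are `O(n ^ (-re s - 2))` and vanish at `s = 0`, so their sum is
analytic near `0` and vanishes there; the difference of the two zeta functions is this sum plus
`(1 - a) * (s * ζ(s + 1, 1))`, and `s * ζ(s + 1, 1)` tends to `1` as `s → 0`. -/
lemma hurwitzZeta_apply_zero_sub {a : ℝ} (ha : 0 < a) (ha1 : a ≤ 1) :
    hurwitzZeta a 0 - hurwitzZeta (1 : ℝ) 0 = 1 - a := by
  let E (n : ℕ) (s : ℂ) : ℂ := ((n + a : ℝ) : ℂ) ^ (-s) - ((n + 1 : ℝ) : ℂ) ^ (-s) -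
    s * (((n + 1 : ℝ) : ℂ) - ((n + a : ℝ) : ℂ)) * ((n + 1 : ℝ) : ℂ) ^ (-(s + 1))
  -- restricted to a disc, where the terms of the series have a summable uniform bound
  let U : Set ℂ := {s | -(1 / 2) < s.re} ∩ Metric.ball 0 3
  let V : Set ℂ := {s | 0 < s.re} ∩ Metric.ball 0 3
  let F (s : ℂ) : ℂ := ∑' n, E n s
  have hU : IsOpen U := (isOpen_lt continuous_const continuous_re).inter Metric.isOpen_ball
  have hV : IsOpen V := (isOpen_lt continuous_const continuous_re).inter Metric.isOpen_ball
  have hVU : V ⊆ U := fun s hs => ⟨by have : 0 < s.re := hs.1; change _ < s.re; linarith, hs.2⟩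
  have hVc : IsPreconnected V :=
    ((convex_halfSpace_re_gt 0).inter (convex_ball 0 3)).isPreconnected
  have h2V : (2 : ℂ) ∈ V := by constructor <;> norm_num
  have hFd : DifferentiableOn ℂ F U := by
    have hsum : Summable fun n : ℕ => 12 * a ^ (-5 : ℝ) * ((n + 1 : ℕ) : ℝ) ^ (-(3 / 2) : ℝ) :=
      (((summable_nat_add_iff 1).2 (Real.summable_nat_rpow.2 (by norm_num))).mul_left _)
    refine differentiableOn_tsum_of_summable_norm hsum (fun n => ?_) hU (fun n s hs => ?_)
    · have h1 : ((n + a : ℝ) : ℂ) ≠ 0 := by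
        have : (n + a : ℝ) ≠ 0 := by positivity
        exact_mod_cast this
      have h2 : ((n + 1 : ℝ) : ℂ) ≠ 0 := by
        have : (n + 1 : ℝ) ≠ 0 := by positivity
        exact_mod_cast this
      intro s _
      refine DifferentiableAt.differentiableWithinAt ?_
      refine ((DifferentiableAt.const_cpow (by fun_prop) (.inl h1)).sub
        (DifferentiableAt.const_cpow (by fun_prop) (.inl h2))).sub (.mul (by fun_prop)
        (DifferentiableAt.const_cpow (by fun_prop) (.inl h2)))
    · have hre : -(1 / 2) < s.re := hs.1
      have hn : ‖s‖ < 3 := by simpa using hs.2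
      have hre' : s.re < 3 := (re_le_norm s).trans_lt hn
      refine (norm_cpow_neg_sub_sub_le (by positivity) (by linarith) (by linarith)).trans ?_
      have h1 : ‖s + 1‖ ≤ 4 := (norm_add_le _ _).trans (by simp; linarith)
      have h2 : ((n : ℝ) + 1 - (n + a)) ^ 2 ≤ 1 := by
        rw [sq_le_one_iff_abs_le_one, abs_le]; constructor <;> linarith
      have h3 : ((n : ℝ) + a) ^ (-s.re - 2) ≤ a ^ (-5 : ℝ) * ((n + 1 : ℕ) : ℝ) ^ (-(3 / 2) : ℝ) := by
        calc ((n : ℝ) + a) ^ (-s.re - 2) ≤ (a * (n + 1 : ℕ)) ^ (-s.re - 2) := by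
              refine Real.rpow_le_rpow_of_nonpos (by positivity) ?_ (by linarith)
              push_cast
              nlinarith [(Nat.cast_nonneg n : (0 : ℝ) ≤ n)]
          _ = a ^ (-s.re - 2) * ((n + 1 : ℕ) : ℝ) ^ (-s.re - 2) :=
              Real.mul_rpow ha.le (by positivity)
          _ ≤ _ := by
              refine mul_le_mul ?_ ?_ (by positivity) (by positivity)
              · exact Real.rpow_le_rpow_of_exponent_ge ha ha1 (by linarith)
              · refine Real.rpow_le_rpow_of_exponent_le ?_ (by linarith)
                simp
      calc _ ≤ 3 * 4 * (a ^ (-5 : ℝ) * ((n + 1 : ℕ) : ℝ) ^ (-(3 / 2) : ℝ)) * 1 := by gcongr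
        _ = _ := by ring
  have hF0 : F 0 = 0 := by simp [F, E]
  have key : Set.EqOn (fun s => hurwitzZeta a s - hurwitzZeta (1 : ℝ) s)
      (fun s => F s + (1 - a) * (s * hurwitzZeta (1 : ℝ) (s + 1))) V := by
    refine AnalyticOnNhd.eqOn_of_preconnected_of_eventuallyEq (𝕜 := ℂ) (z₀ := 2) ?_ ?_ hVc h2V ?_
    · exact (differentiable_hurwitzZeta_sub_hurwitzZeta _ _).differentiableOn.analyticOnNhd hV
    · refine DifferentiableOn.analyticOnNhd (fun s hs => ?_) hV
      have hs0 : s + 1 ≠ 1 := by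
        intro h
        have : 0 < s.re := hs.1
        simp_all
      have h1 : DifferentiableAt ℂ (fun s : ℂ => hurwitzZeta (1 : ℝ) (s + 1)) s :=
        (differentiableAt_hurwitzZeta _ hs0).comp s (differentiableAt_id.add_const (1 : ℂ))
      exact (hFd.differentiableAt (hU.mem_nhds (hVU hs))).differentiableWithinAt.add
        ((differentiableAt_id.mul h1).const_mul _).differentiableWithinAt
    · filter_upwards [(isOpen_lt continuous_const continuous_re).mem_nhds
        (show (2 : ℂ) ∈ {z : ℂ | (1 : ℝ) < z.re} by simp)] with s hs
      have hs : 1 < s.re := hs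
      have A := hasSum_hurwitzZeta_of_one_lt_re ⟨ha.le, ha1⟩ hs
      have B := hasSum_hurwitzZeta_of_one_lt_re (a := 1) ⟨zero_le_one, le_rfl⟩ hs
      have C := hasSum_hurwitzZeta_of_one_lt_re (a := 1) ⟨zero_le_one, le_rfl⟩ (s := s + 1)
        (by simp; linarith)
      have D := ((A.sub B).sub (C.mul_left (s * (1 - a)))).tsum_eq
      have : F s = hurwitzZeta a s - hurwitzZeta (1 : ℝ) s -
          s * (1 - a) * hurwitzZeta (1 : ℝ) (s + 1) := by
        rw [← D]
        refine tsum_congr fun n => ?_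
        simp only [E, cpow_neg, one_div]
        push_cast
        ring
      simp only [this]
      ring
  -- let `s → 0` along the positive reals, where `s * ζ(s + 1, 1) → 1`
  have ht : Tendsto (fun t : ℝ => (t : ℂ)) (𝓝[>] 0) (𝓝 0) :=
    tendsto_nhdsWithin_of_tendsto_nhds (by simpa using continuous_ofReal.tendsto 0)
  have hl := ((differentiable_hurwitzZeta_sub_hurwitzZeta a (1 : ℝ)).continuous.tendsto 0).comp ht
  have hres : Tendsto (fun t : ℝ => (t : ℂ) * hurwitzZeta (1 : ℝ) (t + 1)) (𝓝[>] 0) (𝓝 1) := by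
    have h1 : Tendsto (fun t : ℝ => (t : ℂ) + 1) (𝓝[>] 0) (𝓝[≠] 1) := by
      refine tendsto_nhdsWithin_iff.2 ⟨by simpa using ht.add_const 1, ?_⟩
      filter_upwards [self_mem_nhdsWithin] with t ht
      have : t ≠ 0 := ne_of_gt ht
      simpa using this
    simpa [Function.comp_def] using (hurwitzZeta_residue_one (1 : ℝ)).comp h1
  have h0U : (0 : ℂ) ∈ U := by constructor <;> simp
  have hr := ((hFd.differentiableAt (hU.mem_nhds h0U)).continuousAt.tendsto.comp ht).add
    (hres.const_mul (1 - a : ℂ))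
  rw [hF0] at hr
  have := tendsto_nhds_unique_of_eventuallyEq hl hr ?_
  · simpa using this
  · have hlt : ∀ᶠ t : ℝ in 𝓝[>] 0, t < 3 := nhdsWithin_le_nhds (gt_mem_nhds (by norm_num))
    filter_upwards [self_mem_nhdsWithin, hlt] with t ht ht3
    have ht : 0 < t := ht
    exact key (show (t : ℂ) ∈ V from ⟨by simpa using ht, by simpa [abs_of_pos ht] using ht3⟩)

/-! ### Odd Dirichlet characters at zero -/

lemma ne_one_of_odd {N : ℕ} {χ : DirichletCharacter ℂ N} (hχ : χ.Odd) : χ ≠ 1 := by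
  rintro rfl
  have h : (1 : DirichletCharacter ℂ N) (-1) = -1 := hχ
  rw [MulChar.one_apply isUnit_one.neg] at h
  norm_num at h

/-- For odd `χ`, the value `L(χ, 0)` is minus the generalized Bernoulli number `B_{1,χ}`. -/
lemma LFunction_zero_eq {p : ℕ} [NeZero p] {χ : DirichletCharacter ℂ p} (hp : 1 < p)
    (hχ : χ.Odd) : χ.LFunction 0 = -(∑ j : ZMod p, χ j * (j.val : ℂ)) / p := by
  have hp0 : (p : ℂ) ≠ 0 := by exact_mod_cast NeZero.ne p
  have : Fact (1 < p) := ⟨hp⟩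
  have hne : χ ≠ 1 := ne_one_of_odd hχ
  have hs : ∑ j, χ j = 0 := MulChar.sum_eq_zero_of_ne_one hne
  have h (j : ZMod p) : χ j * hurwitzZeta (ZMod.toAddCircle j) 0 =
      χ j * (hurwitzZeta (1 : ℝ) 0 + 1) - χ j * (j.val : ℂ) / p := by
    -- at `j = 0` the formula for `hurwitzZeta` fails, but `χ 0 = 0`
    rcases eq_or_ne j 0 with rfl | hj
    · simp [MulChar.map_nonunit]
    · have hpos : 0 < j.val := Nat.pos_of_ne_zero (by simpa using hj)
      have hlt := ZMod.val_lt j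
      have := hurwitzZeta_apply_zero_sub (a := (j.val : ℝ) / p) (by positivity)
        (div_le_one_of_le₀ (by exact_mod_cast hlt.le) (by positivity))
      rw [ZMod.toAddCircle_apply, sub_eq_iff_eq_add.1 this]
      push_cast
      ring
  rw [DirichletCharacter.LFunction, ZMod.LFunction]
  simp only [h, Finset.sum_sub_distrib, ← Finset.sum_mul, ← Finset.sum_div, hs]
  simp [neg_div]

/-- By the functional equation, this is the nonvanishing of `L(χ⁻¹, 1)`. -/
lemma LFunction_zero_ne_zero {p : ℕ} [hp : Fact p.Prime] {χ : DirichletCharacter ℂ p}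
    (hχ : χ.Odd) : χ.LFunction 0 ≠ 0 := by
  have hne : χ ≠ 1 := ne_one_of_odd hχ
  have hprim : χ.IsPrimitive := by
    rcases (Nat.dvd_prime hp.out).1 χ.conductor_dvd_level with h | h
    · exact absurd (DirichletCharacter.eq_one_iff_conductor_eq_one.2 h) hne
    · exact h
  have hodd' : χ⁻¹.Odd := by
    have h : χ (-1) = -1 := hχ
    change χ⁻¹ (-1) = -1
    rw [MulChar.inv_apply_eq_inv', h]
    norm_num
  have hp0 : (p : ℂ) ≠ 0 := by exact_mod_cast hp.out.ne_zero
  have hL1 : χ⁻¹.LFunction 1 ≠ 0 :=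
    DirichletCharacter.LFunction_apply_one_ne_zero (inv_ne_one.2 hne)
  have hroot : χ.rootNumber ≠ 0 := by
    have hg : gaussSum χ ZMod.stdAddChar ≠ 0 :=
      gaussSum_ne_zero_of_nontrivial (by simpa using hp0) hne (ZMod.isPrimitive_stdAddChar p)
    have hI : ∀ k : ℕ, I ^ k ≠ 0 := fun k => pow_ne_zero _ I_ne_zero
    exact div_ne_zero (div_ne_zero hg (hI _)) (by simp [cpow_eq_zero_iff, hp0])
  have hfe := hprim.completedLFunction_one_sub 1
  rw [DirichletCharacter.LFunction_eq_completed_div_gammaFactor _ _ (.inr hp.out.ne_one)] at hL1 ⊢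
  rw [sub_self] at hfe
  rw [hfe]
  have hc : (χ⁻¹).completedLFunction 1 ≠ 0 := fun h => hL1 (by rw [h, zero_div])
  refine div_ne_zero (mul_ne_zero (mul_ne_zero ?_ hroot) hc) ?_
  · simp [cpow_eq_zero_iff, hp0]
  · rw [hχ.gammaFactor_def]
    exact Gammaℝ_ne_zero_of_re_pos (by simp)

lemma sum_char_ne_zero {p : ℕ} [hp : Fact p.Prime] {χ : DirichletCharacter ℂ p}
    (hχ : χ.Odd) : ∑ j : ZMod p, χ j * (j.val : ℂ) ≠ 0 := by
  intro h
  exact LFunction_zero_ne_zero hχ (by rw [LFunction_zero_eq hp.out.one_lt hχ, h]; simp)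

/-! ### The sequence of powers of a primitive root -/

lemma natCast_ne_zero_of_orderOf {p m : ℕ} [hp : Fact p.Prime]
    (hm : orderOf (m : ZMod p) = p - 1) : (m : ZMod p) ≠ 0 := by
  intro h
  have h1 := hp.out.one_lt
  have h2 := pow_orderOf_eq_one (m : ZMod p)
  rw [hm, h, zero_pow (by omega)] at h2
  exact zero_ne_one h2

lemma image_pow_eq {p m : ℕ} [hp : Fact p.Prime] (hm : orderOf (m : ZMod p) = p - 1) :
    (Finset.range (p - 1)).image (fun k => (m : ZMod p) ^ k) = Finset.univ.erase 0 := by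
  have h1 := hp.out.one_lt
  have hm0 := natCast_ne_zero_of_orderOf hm
  refine Finset.eq_of_subset_of_card_le ?_ ?_
  · intro y hy
    obtain ⟨k, -, rfl⟩ := Finset.mem_image.1 hy
    simp [hm0]
  · rw [Finset.card_image_of_injOn, Finset.card_erase_of_mem (Finset.mem_univ _),
      Finset.card_univ, ZMod.card, Finset.card_range]
    intro i hi j hj hij
    exact pow_injOn_Iio_orderOf (by simpa [hm] using hi) (by simpa [hm] using hj) hij

lemma pow_half_eq_neg_one {p m : ℕ} [hp : Fact p.Prime] (hp3 : 3 < p)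
    (hm : orderOf (m : ZMod p) = p - 1) : (m : ZMod p) ^ ((p - 1) / 2) = -1 := by
  have hodd := hp.out.eq_two_or_odd
  have h2 : ((m : ZMod p) ^ ((p - 1) / 2)) ^ 2 = 1 := by
    rw [← pow_mul, show (p - 1) / 2 * 2 = p - 1 by omega, ← hm, pow_orderOf_eq_one]
  refine (eq_or_eq_neg_of_sq_eq_sq _ 1 (by simpa using h2)).resolve_left ?_
  exact pow_ne_one_of_lt_orderOf (by omega) (by omega)

lemma mod_add_half {p m : ℕ} [hp : Fact p.Prime] (hp3 : 3 < p)
    (hm : orderOf (m : ZMod p) = p - 1) (k : ℕ) :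
    m ^ (k + (p - 1) / 2) % p + m ^ k % p = p := by
  have h1 := hp.out.one_lt
  have : NeZero ((m : ZMod p) ^ k) := ⟨pow_ne_zero _ (natCast_ne_zero_of_orderOf hm)⟩
  have e (j : ℕ) : m ^ j % p = ((m : ZMod p) ^ j).val := by
    rw [← ZMod.val_natCast]; push_cast; rfl
  rw [e, e, pow_add, pow_half_eq_neg_one hp3 hm, mul_neg_one, ZMod.val_neg_of_ne_zero]
  have := ZMod.val_lt ((m : ZMod p) ^ k)
  omega

/-- The sum is `∑ χ a * a` for the odd character `χ` modulo `p` determined by `χ m = ζ`. -/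
lemma sum_pow_mul_ne_zero {p m : ℕ} [hp : Fact p.Prime] (hp3 : 3 < p)
    (hm : orderOf (m : ZMod p) = p - 1) {ζ : ℂ} (hζ : ζ ^ ((p - 1) / 2) = -1) :
    ∑ k ∈ Finset.range (p - 1), ζ ^ k * ((m ^ k % p : ℕ) : ℂ) ≠ 0 := by
  have hodd := hp.out.eq_two_or_odd
  have himg := image_pow_eq hm
  have hm0 := natCast_ne_zero_of_orderOf hm
  have hζ0 : ζ ≠ 0 := by
    rintro rfl
    rw [zero_pow (by omega)] at hζ
    norm_num at hζ
  have hgen : ∀ y : (ZMod p)ˣ, y ∈ Subgroup.zpowers (Units.mk0 _ hm0) := by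
    intro y
    have : (y : ZMod p) ∈ Finset.univ.erase 0 := by simp
    rw [← himg] at this
    obtain ⟨k, -, hk⟩ := Finset.mem_image.1 this
    exact ⟨k, by ext; simpa using hk⟩
  have hroot : Units.mk0 ζ hζ0 ∈ rootsOfUnity (Fintype.card (ZMod p)ˣ) ℂ := by
    rw [_root_.mem_rootsOfUnity, ZMod.card_units]
    ext
    rw [Units.val_pow_eq_pow_val, Units.val_mk0, show p - 1 = (p - 1) / 2 * 2 by omega, pow_mul, hζ]
    norm_num
  let χ : DirichletCharacter ℂ p := MulChar.ofRootOfUnity hroot hgen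
  have hχm : χ (m : ZMod p) = ζ := MulChar.ofRootOfUnity_spec hroot hgen
  have hχ : χ.Odd := by
    change χ (-1) = -1
    rw [← pow_half_eq_neg_one hp3 hm, map_pow, hχm, hζ]
  convert sum_char_ne_zero hχ using 1
  rw [← Finset.sum_erase (a := (0 : ZMod p)) Finset.univ (by simp), ← himg, Finset.sum_image]
  · refine Finset.sum_congr rfl fun k _ => ?_
    rw [map_pow, hχm, ← ZMod.val_natCast]
    push_cast
    rfl
  · intro i hi j hj hij
    exact pow_injOn_Iio_orderOf (by simpa [hm] using hi) (by simpa [hm] using hj) hij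

lemma sum_range_shift {f : ℕ → ℂ} {n : ℕ} (hf : ∀ k, f (k + n) = f k) (j : ℕ) :
    ∑ k ∈ Finset.range n, f (k + j) = ∑ k ∈ Finset.range n, f k := by
  induction j with
  | zero => rfl
  | succ j ih =>
    rw [← ih]
    have h1 := Finset.sum_range_succ (fun k => f (k + j)) n
    rw [Finset.sum_range_succ', add_comm n j, hf, zero_add] at h1
    simpa [add_assoc, add_comm 1] using h1

/-- The polynomial with coefficients `c` has degree at most `(p - 1) / 2`, but vanishes at `1` and
at all the `(p - 1) / 2` solutions of `w ^ ((p - 1) / 2) = -1`. -/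
lemma eq_zero_of_forall_sum_eq_zero {p m : ℕ} [hp : Fact p.Prime] (hp3 : 3 < p)
    (hm : orderOf (m : ZMod p) = p - 1) (c : Fin ((p - 1) / 2 + 1) → ℝ)
    (hc : ∀ k : ℕ, ∑ j, c j * ((m ^ (k + (j : ℕ)) % p : ℕ) : ℝ) = 0) : c = 0 := by
  have hodd := hp.out.eq_two_or_odd
  have hper (k : ℕ) : m ^ (k + (p - 1)) % p = m ^ k % p := by
    have h1 := mod_add_half hp3 hm k
    have h2 := mod_add_half hp3 hm (k + (p - 1) / 2)
    rw [add_assoc, show (p - 1) / 2 + (p - 1) / 2 = p - 1 by omega] at h2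
    omega
  have hroot {w : ℂ} (hw : w ^ (p - 1) = 1)
      (hS : ∑ k ∈ Finset.range (p - 1), w⁻¹ ^ k * ((m ^ k % p : ℕ) : ℂ) ≠ 0) :
      ∑ j, (c j : ℂ) * w ^ (j : ℕ) = 0 := by
    have hw0 : w ≠ 0 := by
      rintro rfl
      rw [zero_pow (by omega)] at hw
      norm_num at hw
    refine (mul_eq_zero.1 ?_).resolve_right hS
    calc _ = ∑ j, (c j : ℂ) * w ^ (j : ℕ) *
          ∑ k ∈ Finset.range (p - 1), w⁻¹ ^ (k + (j : ℕ)) * ((m ^ (k + (j : ℕ)) % p : ℕ) : ℂ) := by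
          rw [Finset.sum_mul]
          refine Finset.sum_congr rfl fun j _ => ?_
          rw [sum_range_shift (f := fun k => w⁻¹ ^ k * ((m ^ k % p : ℕ) : ℂ))]
          intro k
          rw [hper, pow_add, inv_pow w (p - 1), hw, inv_one, mul_one]
      _ = ∑ k ∈ Finset.range (p - 1), w⁻¹ ^ k *
          ((∑ j, c j * ((m ^ (k + (j : ℕ)) % p : ℕ) : ℝ) : ℝ) : ℂ) := by
          simp_rw [Finset.mul_sum]
          rw [Finset.sum_comm]
          refine Finset.sum_congr rfl fun k _ => ?_
          push_cast
          rw [Finset.mul_sum]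
          refine Finset.sum_congr rfl fun j _ => ?_
          rw [pow_add, inv_pow w (j : ℕ)]
          field_simp
      _ = 0 := by simp [hc]
  obtain ⟨η, hη⟩ : ∃ η : ℂ, IsPrimitiveRoot η (p - 1) :=
    ⟨_, Complex.isPrimitiveRoot_exp (p - 1) (by omega)⟩
  have hηh : η ^ ((p - 1) / 2) = -1 := by
    have h2 : (η ^ ((p - 1) / 2)) ^ 2 = 1 := by
      rw [← pow_mul, show (p - 1) / 2 * 2 = p - 1 by omega, hη.pow_eq_one]
    exact (eq_or_eq_neg_of_sq_eq_sq _ 1 (by simpa using h2)).resolve_left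
      (hη.pow_ne_one_of_pos_of_lt (by omega) (by omega))
  -- truncated subtraction makes the exponents `0, 1, 3, 5, …`: the root `1`, then the odd powers
  let e (i : Fin ((p - 1) / 2 + 1)) : ℕ := 2 * i - 1
  let P : Polynomial ℂ := ∑ j : Fin ((p - 1) / 2 + 1), Polynomial.monomial (j : ℕ) (c j : ℂ)
  have hP : P = 0 := by
    refine Polynomial.eq_zero_of_natDegree_lt_card_of_eval_eq_zero P
      (f := fun i : Fin ((p - 1) / 2 + 1) => η ^ e i) ?_ ?_ ?_
    · intro i j hij
      have := hη.pow_inj (by have := i.2; simp only [e]; omega)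
        (by have := j.2; simp only [e]; omega) hij
      simp only [e] at this
      ext
      omega
    · intro i
      have hw : (η ^ e i) ^ (p - 1) = 1 := by
        rw [← pow_mul, mul_comm, pow_mul, hη.pow_eq_one, one_pow]
      simp only [P, Polynomial.eval_finsetSum, Polynomial.eval_monomial]
      refine hroot hw ?_
      rcases Nat.eq_zero_or_pos (i : ℕ) with h0 | h0
      · simp only [e, h0, mul_zero, zero_le, Nat.sub_eq_zero_of_le, pow_zero, inv_one, one_pow, one_mul]
        rw [← Nat.cast_sum]
        refine Nat.cast_ne_zero.2 (ne_of_gt ?_)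
        refine Finset.sum_pos (fun k _ => ?_) ⟨0, Finset.mem_range.2 (by omega)⟩
        have h1 := mod_add_half hp3 hm k
        have h2 := Nat.mod_lt (m ^ (k + (p - 1) / 2)) hp.out.pos
        omega
      · refine sum_pow_mul_ne_zero hp3 hm ?_
        rw [inv_pow, ← pow_mul, mul_comm, pow_mul, hηh, Odd.neg_one_pow ⟨i - 1, by simp only [e]; omega⟩]
        norm_num
    · rw [Fintype.card_fin, Nat.lt_succ_iff]
      refine Polynomial.natDegree_sum_le_of_forall_le _ _ fun j _ => ?_
      exact (Polynomial.natDegree_monomial_le _).trans (by omega)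
  ext j
  have hcoef : P.coeff (j : ℕ) = c j := by
    simp [P, Polynomial.coeff_monomial, Fin.val_inj]
  rw [hP] at hcoef
  simpa using hcoef.symm

/-! ### The rank -/

/-- **Full rank of the EDMD data matrix for Diffie–Hellman.**
Let `p` be an odd prime with `p > 3`, `m` a primitive root modulo `p`,
`x k = m ^ k % p`, and `q̃ = (p-1)/2`. For `q ≥ q̃` and `N ≥ q̃ + 1`, the real
`(q+1) × N` matrix `Z` with entries `Z j k = x (k + j)` (whose columns are the
lifted states `z_k = (x_k, ..., x_{k+q})`) satisfies `rank Z = q̃ + 1`. -/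
theorem dh_data_matrix_rank (p m q N : ℕ) (hp : p.Prime) (hp3 : 3 < p)
    (hm : orderOf (m : ZMod p) = p - 1)
    (hq : (p - 1) / 2 ≤ q) (hN : (p - 1) / 2 + 1 ≤ N) :
    (Matrix.of (fun (j : Fin (q + 1)) (k : Fin N) =>
      ((m ^ ((k : ℕ) + (j : ℕ)) % p : ℕ) : ℝ))).rank = (p - 1) / 2 + 1 := by
  have : Fact p.Prime := ⟨hp⟩
  have hrec (k : ℕ) : ((m ^ (k + ((p - 1) / 2 + 1)) % p : ℕ) : ℝ) =
      ((m ^ (k + (p - 1) / 2) % p : ℕ) : ℝ) + ((m ^ k % p : ℕ) : ℝ)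
        - ((m ^ (k + 1) % p : ℕ) : ℝ) := by
    have h1 := mod_add_half hp3 hm k
    have h2 := mod_add_half hp3 hm (k + 1)
    rw [show k + 1 + (p - 1) / 2 = k + ((p - 1) / 2 + 1) by ring] at h2
    rw [← Nat.cast_add, h1, eq_sub_iff_add_eq, ← Nat.cast_add, h2]
  let r (j : ℕ) (k : Fin N) : ℝ := ((m ^ ((k : ℕ) + j) % p : ℕ) : ℝ)
  let v (i : Fin ((p - 1) / 2 + 1)) : Fin N → ℝ := r i
  have hspan (j : ℕ) : r j ∈ Submodule.span ℝ (Set.range v) := by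
    induction j using Nat.strong_induction_on with
    | _ j ih =>
      rcases lt_or_ge j ((p - 1) / 2 + 1) with h | h
      · exact Submodule.subset_span ⟨⟨j, h⟩, rfl⟩
      · obtain ⟨i, rfl⟩ := Nat.exists_eq_add_of_le' h
        have : r (i + ((p - 1) / 2 + 1)) = r (i + (p - 1) / 2) + r i - r (i + 1) := by
          ext k
          simpa only [r, add_assoc, Pi.add_apply, Pi.sub_apply] using hrec (k + i)
        rw [this]
        exact sub_mem (add_mem (ih _ (by omega)) (ih _ (by omega))) (ih _ (by omega))
  have hli : LinearIndependent ℝ v := by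
    rw [Fintype.linearIndependent_iff]
    intro c hc
    have hz (k : ℕ) : ∑ j, c j * ((m ^ (k + (j : ℕ)) % p : ℕ) : ℝ) = 0 := by
      induction k using Nat.strong_induction_on with
      | _ k ih =>
        rcases lt_or_ge k ((p - 1) / 2 + 1) with h | h
        -- the first `(p - 1) / 2 + 1` columns exist because of `hN`
        · simpa [v, r] using congrFun hc ⟨k, by omega⟩
        · obtain ⟨i, rfl⟩ := Nat.exists_eq_add_of_le' h
          have e (j : ℕ) : ((m ^ (i + ((p - 1) / 2 + 1) + j) % p : ℕ) : ℝ) =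
              ((m ^ (i + (p - 1) / 2 + j) % p : ℕ) : ℝ) + ((m ^ (i + j) % p : ℕ) : ℝ)
              - ((m ^ (i + 1 + j) % p : ℕ) : ℝ) := by
            have := hrec (i + j)
            rwa [add_right_comm i j, add_right_comm i j, add_right_comm i j] at this
          simp only [e, mul_sub, mul_add, Finset.sum_sub_distrib, Finset.sum_add_distrib]
          rw [ih _ (by omega), ih _ (by omega), ih _ (by omega)]
          simp
    exact congrFun (eq_zero_of_forall_sum_eq_zero hp3 hm c hz)
  rw [Matrix.rank_eq_finrank_span_row]
  have hs : Submodule.span ℝ (Set.range (Matrix.of (fun (j : Fin (q + 1)) (k : Fin N) =>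
      ((m ^ ((k : ℕ) + (j : ℕ)) % p : ℕ) : ℝ))).row) = Submodule.span ℝ (Set.range v) := by
    refine le_antisymm (Submodule.span_le.2 ?_) (Submodule.span_mono ?_)
    · rintro _ ⟨j, rfl⟩
      exact hspan j
    · rintro _ ⟨i, rfl⟩
      exact ⟨⟨i, by omega⟩, rfl⟩
  rw [hs, finrank_span_eq_card hli, Fintype.card_fin]
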